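/- The map I : NBV([a,b]) → (C([a,b],ℂ))′ sending φ to the functional x ↦ ∫_a^b x(t) dφ(t) is an isometric isomorphism of Banach spaces, where NBV is normed by total variation. -/

import Mathlib

/-- `I` is the Riemann–Stieltjes integral `∫_a^b x dφ` (mesh limit of tagged
Riemann–Stieltjes sums). -/
def IsRSIntegral (a b : ℝ) (φ x : ℝ → ℂ) (I : ℂ) : Prop :=
  ∀ ε > (0 : ℝ), ∃ δ > (0 : ℝ), ∀ (n : ℕ) (t : Fin (n + 1) → ℝ) (ξ : Fin n → ℝ),
    t 0 = a → t (Fin.last n) = b → Monotone t →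
    (∀ i : Fin n, t i.castSucc ≤ ξ i ∧ ξ i ≤ t i.succ ∧ t i.succ - t i.castSucc < δ) →
    ‖(∑ i : Fin n, x (ξ i) * (φ (t i.succ) - φ (t i.castSucc))) - I‖ < ε

/-- `φ` belongs to `NBV([a,b])`: bounded variation on `[a,b]`, left-continuous on
`(a,b)`, `φ(a) = 0` (normalized outside `[a,b]` by constancy). -/
def NBVOn (a b : ℝ) (φ : ℝ → ℂ) : Prop :=
  BoundedVariationOn φ (Set.Icc a b) ∧
    (∀ t ∈ Set.Ioo a b, ContinuousWithinAt φ (Set.Iio t) t) ∧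
    φ a = 0 ∧ (∀ t ≤ a, φ t = 0) ∧ (∀ t, b ≤ t → φ t = φ b)

/-- The functional `ℓ` on `C([a,b],ℂ)` is represented by Riemann–Stieltjes integration
against `φ`. -/
def RepresentsOn (a b : ℝ) (hab : a ≤ b) (φ : ℝ → ℂ) (ℓ : C(Set.Icc a b, ℂ) →L[ℂ] ℂ) :
    Prop :=
  ∀ x : C(Set.Icc a b, ℂ), IsRSIntegral a b φ (Set.IccExtend hab x) (ℓ x)

/-! Riemann–Stieltjes sums against an integrator of bounded variation are Cauchy along partitions of
vanishing mesh, which gives the functional `x ↦ ∫ x dφ` and the bound `‖ℓ‖ ≤ V(φ)`. Evaluating the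
functional at continuous ramps that approximate the indicator function of `(-∞, t)` from the left
recovers `φ t - φ a` at every point `t` of left continuity, so a normalized `φ` is unique.

Conversely, extend `ℓ` by Hahn–Banach to a functional `L` on the bounded functions and put
`f t = L χ_t`, with `χ_t` the indicator function of `[a, t]` and `χ_a = 0`. Step functions built
from the `χ_t` approximate a continuous function uniformly, so `f` represents `ℓ`, and testing `L`
on unimodular combinations of increments of `χ` gives `V(f) ≤ ‖ℓ‖`. Passing to left limits in
`(a, b)` does not increase the variation; it keeps the values of `f` at `a`, at `b` and on a dense
set, and partitions with nodes among these points suffice to compute the integral. -/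

open Filter Topology Set
open scoped ENNReal

section Increments

variable {E : Type*} [SeminormedAddCommGroup E] [NormedSpace ℝ E]

theorem norm_sum_increment_smul_le {w : ℕ → ℝ} (hw : Monotone w) {c : ℕ → E} {K : ℝ} {n : ℕ}
    (hc : ∀ i < n, w i ≠ w (i + 1) → ‖c i‖ ≤ K) :
    ‖∑ i ∈ Finset.range n, (w (i + 1) - w i) • c i‖ ≤ (w n - w 0) * K := by
  rw [← Finset.sum_range_sub w, Finset.sum_mul]
  refine norm_sum_le_of_le _ fun i hi => ?_
  have hwi : 0 ≤ w (i + 1) - w i := sub_nonneg.2 (hw i.le_succ)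
  rw [norm_smul, Real.norm_of_nonneg hwi]
  rcases eq_or_ne (w i) (w (i + 1)) with h | h
  · simp [h]
  · exact mul_le_mul_of_nonneg_left (hc i (Finset.mem_range.1 hi) h) hwi

theorem norm_sum_one_sub_smul_increment_sub_le {w : ℕ → ℝ} (hw : Monotone w) {f : ℕ → E} {z : E}
    {ε : ℝ} {n : ℕ} (h₀ : w 0 = 0) (h₁ : w n = 1)
    (hf : ∀ i < n, w i ≠ w (i + 1) → ‖f i - z‖ ≤ ε) :
    ‖∑ i ∈ Finset.range n, (1 - w (i + 1)) • (f (i + 1) - f i) - (z - f 0)‖ ≤ ε := by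
  have summation_by_parts : ∑ i ∈ Finset.range n, (1 - w (i + 1)) • (f (i + 1) - f i) - (z - f 0) =
      ∑ i ∈ Finset.range n, (w (i + 1) - w i) • (f i - z) := by
    have telescope := Finset.sum_range_sub (fun i => (1 - w i) • (f i - z)) n
    simp only [h₀, h₁, sub_self, zero_smul, sub_zero, one_smul, zero_sub, neg_sub] at telescope
    rw [← telescope, ← Finset.sum_sub_distrib]
    exact Finset.sum_congr rfl fun i _ => by module
  rw [summation_by_parts]
  simpa [h₀, h₁] using norm_sum_increment_smul_le hw hf

end Increments

/-- A tagged partition of `[a, b]`. The sequences `node` and `tag` are total on `ℕ` so that sums can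
range over `Finset.range size`; only the nodes up to `size` and the tags below `size` matter. -/
structure TaggedPartition (a b : ℝ) where
  size : ℕ
  node : ℕ → ℝ
  tag : ℕ → ℝ
  node_zero : node 0 = a
  node_size : node size = b
  monotone_node : Monotone node
  tag_mem : ∀ i < size, tag i ∈ Icc (node i) (node (i + 1))

namespace TaggedPartition

variable {a b : ℝ}

/-- The partition has mesh less than `δ`. -/
def MeshLT (p : TaggedPartition a b) (δ : ℝ) : Prop :=
  ∀ i < p.size, p.node (i + 1) - p.node i < δ

/-- The filter of tagged partitions whose mesh tends to zero: Riemann–Stieltjes integrals are the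
limits of Riemann–Stieltjes sums along it. -/
def meshFilter (a b : ℝ) : Filter (TaggedPartition a b) :=
  ⨅ δ ∈ Ioi (0 : ℝ), 𝓟 {p | p.MeshLT δ}

theorem MeshLT.mono {p : TaggedPartition a b} {δ δ' : ℝ} (hp : p.MeshLT δ) (h : δ ≤ δ') :
    p.MeshLT δ' :=
  fun i hi => (hp i hi).trans_le h

theorem hasBasis_meshFilter (a b : ℝ) :
    (meshFilter a b).HasBasis (fun δ : ℝ => 0 < δ) fun δ => {p | p.MeshLT δ} := by
  refine hasBasis_biInf_principal (fun δ hδ δ' hδ' => ?_) ⟨1, mem_Ioi.2 one_pos⟩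
  exact ⟨min δ δ', lt_min (mem_Ioi.1 hδ) hδ', fun p hp => hp.mono (min_le_left _ _),
    fun p hp => hp.mono (min_le_right _ _)⟩

theorem eventually_meshLT {δ : ℝ} (hδ : 0 < δ) : ∀ᶠ p in meshFilter a b, p.MeshLT δ :=
  (hasBasis_meshFilter a b).mem_of_mem hδ

theorem node_mem (p : TaggedPartition a b) {i : ℕ} (hi : i ≤ p.size) : p.node i ∈ Icc a b :=
  ⟨p.node_zero.ge.trans (p.monotone_node i.zero_le), (p.monotone_node hi).trans p.node_size.le⟩

theorem tag_mem_Icc (p : TaggedPartition a b) {i : ℕ} (hi : i < p.size) : p.tag i ∈ Icc a b :=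
  Icc_subset_Icc (p.node_mem hi.le).1 (p.node_mem hi).2 (p.tag_mem i hi)

theorem exists_meshLT_node_mem (hab : a ≤ b) {D : Set ℝ} (hD : Dense D) {δ : ℝ} (hδ : 0 < δ) :
    ∃ p : TaggedPartition a b, p.MeshLT δ ∧ (∀ i, p.tag i = p.node (i + 1)) ∧
      ∀ i, p.node i ∈ insert a (insert b D) := by
  set h := δ / 2 with hh
  have h_pos : 0 < h := half_pos hδ
  have exists_point (i : ℕ) : ∃ y ∈ D, y ∈ Ioo (a + i * h) (a + (i + 1) * h) :=
    hD.exists_between (by linarith)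
  choose y hyD hy using exists_point
  obtain ⟨n, hn⟩ := Archimedean.arch (b - a) h_pos
  rw [nsmul_eq_mul] at hn
  let u : ℕ → ℝ := fun i => Nat.casesOn i a y
  have u_le (i : ℕ) : u i ≤ a + i * h := by
    cases i with
    | zero => simp [u]
    | succ i => exact_mod_cast (hy i).2.le
  have le_u (i : ℕ) : a + (i - 1) * h ≤ u i := by
    cases i with
    | zero => simp [u, h_pos.le]
    | succ i => simpa using (hy i).1.le
  have u_mono : Monotone u := monotone_nat_of_le_succ fun i => (u_le i).trans (hy i).1.le
  refine ⟨⟨n + 1, fun i => min (u i) b, fun i => min (u (i + 1)) b, by simpa [u] using hab, ?_,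
    u_mono.min monotone_const, fun i _ => ⟨min_le_min_right _ (u_mono i.le_succ), le_rfl⟩⟩,
    fun i _ => ?_, fun _ => rfl, fun i => ?_⟩
  · exact min_eq_right (by linarith [(hy n).1])
  · have mesh_u : u (i + 1) - u i < δ := by linarith [(hy i).2, le_u i]
    have := u_mono i.le_succ
    rcases min_cases (u (i + 1)) b with h₁ | h₁ <;> rcases min_cases (u i) b with h₂ | h₂ <;>
      simp only [h₁.1, h₂.1] <;> linarith
  · rcases min_choice (u i) b with hi | hi
    · simp only [hi]
      cases i with
      | zero => exact mem_insert _ _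
      | succ i => exact mem_insert_of_mem _ (mem_insert_of_mem _ (hyD i))
    · simp [hi]

theorem frequently_tag_eq_and_node_mem (hab : a ≤ b) {D : Set ℝ} (hD : Dense D) :
    ∃ᶠ p in meshFilter a b, (∀ i, p.tag i = p.node (i + 1)) ∧
      ∀ i, p.node i ∈ insert a (insert b D) :=
  (hasBasis_meshFilter a b).frequently_iff.2 fun _ hδ => exists_meshLT_node_mem hab hD hδ

theorem meshFilter_neBot (hab : a ≤ b) : (meshFilter a b).NeBot :=
  (frequently_true_iff_neBot _).1 <|
    (frequently_tag_eq_and_node_mem hab dense_univ).mono fun _ _ => trivial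

end TaggedPartition

namespace TaggedPartition

section RiemannStieltjesSum

variable {a b : ℝ} {𝕜 E : Type*} [NormedField 𝕜] [NormedAddCommGroup E] [NormedSpace 𝕜 E]

/-- The Riemann–Stieltjes sum of the integrand `x` against the integrator `φ`. -/
def rsSum (φ : ℝ → E) (x : ℝ → 𝕜) (p : TaggedPartition a b) : E :=
  ∑ i ∈ Finset.range p.size, x (p.tag i) • (φ (p.node (i + 1)) - φ (p.node i))

theorem rsSum_add_right (φ : ℝ → E) (x y : ℝ → 𝕜) (p : TaggedPartition a b) :
    p.rsSum φ (x + y) = p.rsSum φ x + p.rsSum φ y := by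
  simp only [rsSum, Pi.add_apply, add_smul, Finset.sum_add_distrib]

theorem rsSum_smul_right (c : 𝕜) (φ : ℝ → E) (x : ℝ → 𝕜) (p : TaggedPartition a b) :
    p.rsSum φ (c • x) = c • p.rsSum φ x := by
  simp only [rsSum, Pi.smul_apply, smul_assoc, Finset.smul_sum]

theorem rsSum_add_left (φ ψ : ℝ → E) (x : ℝ → 𝕜) (p : TaggedPartition a b) :
    p.rsSum (φ + ψ) x = p.rsSum φ x + p.rsSum ψ x := by
  simp only [rsSum, Pi.add_apply, add_sub_add_comm, smul_add, Finset.sum_add_distrib]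

theorem rsSum_smul_left (c : 𝕜) (φ : ℝ → E) (x : ℝ → 𝕜) (p : TaggedPartition a b) :
    p.rsSum (c • φ) x = c • p.rsSum φ x := by
  simp only [rsSum, Pi.smul_apply, ← smul_sub, smul_comm _ c, Finset.smul_sum]

theorem sum_norm_increment_le {φ : ℝ → E} (hφ : BoundedVariationOn φ (Icc a b))
    (p : TaggedPartition a b) :
    ∑ i ∈ Finset.range p.size, ‖φ (p.node (i + 1)) - φ (p.node i)‖ ≤
      (eVariationOn φ (Icc a b)).toReal := by
  have h := ENNReal.toReal_mono hφ <| eVariationOn.sum_le_of_monotoneOn_Iic (n := p.size)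
    (p.monotone_node.monotoneOn _) fun i hi => p.node_mem hi
  rw [ENNReal.toReal_sum fun i _ => edist_ne_top _ _] at h
  simpa only [← dist_edist, dist_eq_norm] using h

theorem norm_rsSum_le {φ : ℝ → E} (hφ : BoundedVariationOn φ (Icc a b)) {x : ℝ → 𝕜} {C : ℝ}
    (hC : ∀ s ∈ Icc a b, ‖x s‖ ≤ C) (hC₀ : 0 ≤ C) (p : TaggedPartition a b) :
    ‖p.rsSum φ x‖ ≤ C * (eVariationOn φ (Icc a b)).toReal := by
  refine le_trans ?_ (mul_le_mul_of_nonneg_left (p.sum_norm_increment_le hφ) hC₀)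
  rw [Finset.mul_sum]
  refine norm_sum_le_of_le _ fun i hi => ?_
  rw [norm_smul]
  gcongr
  exact hC _ (p.tag_mem_Icc (Finset.mem_range.1 hi))

end RiemannStieltjesSum

section Existence

variable {a b : ℝ} {𝕜 E : Type*} [NormedField 𝕜] [NormedAddCommGroup E] [NormedSpace 𝕜 E]

/-- The projection of `s` onto the `j`-th interval of the partition `p`. -/
def clamp (p : TaggedPartition a b) (j : ℕ) (s : ℝ) : ℝ :=
  max (p.node j) (min s (p.node (j + 1)))

theorem monotone_clamp (p : TaggedPartition a b) (j : ℕ) : Monotone (p.clamp j) :=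
  monotone_const.max (monotone_id.min monotone_const)

theorem clamp_mem (p : TaggedPartition a b) (j : ℕ) (s : ℝ) :
    p.clamp j s ∈ Icc (p.node j) (p.node (j + 1)) :=
  ⟨le_max_left _ _, max_le (p.monotone_node j.le_succ) (min_le_right _ _)⟩

theorem clamp_of_le_node (p : TaggedPartition a b) {j : ℕ} {s : ℝ} (hs : s ≤ p.node j) :
    p.clamp j s = p.node j :=
  max_eq_left ((min_le_left _ _).trans hs)

theorem clamp_of_node_le (p : TaggedPartition a b) {j : ℕ} {s : ℝ} (hs : p.node (j + 1) ≤ s) :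
    p.clamp j s = p.node (j + 1) := by
  rw [clamp, min_eq_right hs, max_eq_right (p.monotone_node j.le_succ)]

theorem sum_clamp_sub_node (φ : ℝ → E) (p : TaggedPartition a b) {s : ℝ} (hs : s ∈ Icc a b) :
    ∑ j ∈ Finset.range p.size, (φ (p.clamp j s) - φ (p.node j)) = φ s - φ a := by
  have telescope (j : ℕ) : φ (p.clamp j s) - φ (p.node j) =
      φ (min s (p.node (j + 1))) - φ (min s (p.node j)) := by
    have hj := p.monotone_node j.le_succ
    rcases le_total s (p.node j) with h | h
    · rw [p.clamp_of_le_node h, min_eq_left h, min_eq_left (h.trans hj), sub_self, sub_self]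
    · rw [clamp, max_eq_right (le_min h hj), min_eq_right h]
  simp only [telescope]
  rw [Finset.sum_range_sub fun j => φ (min s (p.node j)), p.node_zero, p.node_size,
    min_eq_left hs.2, min_eq_right hs.1]

/-- The increment of `φ` over the intersection of the `i`-th interval of `p` with the `j`-th
interval of `q`, which is zero when this intersection is empty. -/
def crossIncrement (φ : ℝ → E) (p q : TaggedPartition a b) (i j : ℕ) : E :=
  φ (q.clamp j (p.node (i + 1))) - φ (q.clamp j (p.node i))

theorem sum_crossIncrement_left (φ : ℝ → E) (p q : TaggedPartition a b) {j : ℕ} (hj : j < q.size) :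
    ∑ i ∈ Finset.range p.size, crossIncrement φ p q i j = φ (q.node (j + 1)) - φ (q.node j) := by
  simp only [crossIncrement]
  rw [Finset.sum_range_sub fun i => φ (q.clamp j (p.node i)), p.node_zero, p.node_size,
    q.clamp_of_node_le (q.node_mem hj).2, q.clamp_of_le_node (q.node_mem hj.le).1]

theorem sum_crossIncrement_right (φ : ℝ → E) (p q : TaggedPartition a b) {i : ℕ}
    (hi : i < p.size) :
    ∑ j ∈ Finset.range q.size, crossIncrement φ p q i j = φ (p.node (i + 1)) - φ (p.node i) := by
  rw [← sub_sub_sub_cancel_right (φ (p.node (i + 1))) (φ (p.node i)) (φ a),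
    ← q.sum_clamp_sub_node φ (p.node_mem hi), ← q.sum_clamp_sub_node φ (p.node_mem hi.le),
    ← Finset.sum_sub_distrib]
  exact Finset.sum_congr rfl fun j _ => (sub_sub_sub_cancel_right _ _ _).symm

theorem sum_norm_crossIncrement_le {φ : ℝ → E} (hφ : BoundedVariationOn φ (Icc a b))
    (p q : TaggedPartition a b) :
    ∑ j ∈ Finset.range q.size, ∑ i ∈ Finset.range p.size, ‖crossIncrement φ p q i j‖ ≤
      (eVariationOn φ (Icc a b)).toReal := by
  have enorm_le : ∑ j ∈ Finset.range q.size, ∑ i ∈ Finset.range p.size,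
      ‖crossIncrement φ p q i j‖ₑ ≤ eVariationOn φ (Icc a b) := by
    have additive := eVariationOn.sum' φ q.monotone_node (n := q.size)
    rw [q.node_zero, q.node_size] at additive
    rw [← additive]
    refine Finset.sum_le_sum fun j _ => ?_
    simp only [crossIncrement, ← edist_eq_enorm_sub]
    exact eVariationOn.sum_le ((q.monotone_clamp j).comp p.monotone_node) fun _ => q.clamp_mem j _
  have h := ENNReal.toReal_mono hφ enorm_le
  rw [ENNReal.toReal_sum fun j _ => ENNReal.sum_ne_top.2 fun i _ => enorm_ne_top] at h
  simpa only [ENNReal.toReal_sum fun _ _ => enorm_ne_top, toReal_enorm] using h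

theorem abs_tag_sub_tag_lt {φ : ℝ → E} {p q : TaggedPartition a b} {δ : ℝ} (hp : p.MeshLT δ)
    (hq : q.MeshLT δ) {i j : ℕ} (hi : i < p.size) (hj : j < q.size)
    (h : crossIncrement φ p q i j ≠ 0) : |p.tag i - q.tag j| < 2 * δ := by
  have hp_lt : q.node j < p.node (i + 1) := by
    by_contra! hle
    refine h ?_
    rw [crossIncrement, q.clamp_of_le_node hle,
      q.clamp_of_le_node ((p.monotone_node i.le_succ).trans hle), sub_self]
  have hq_lt : p.node i < q.node (j + 1) := by
    by_contra! hle
    refine h ?_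
    rw [crossIncrement, q.clamp_of_node_le hle,
      q.clamp_of_node_le (hle.trans (p.monotone_node i.le_succ)), sub_self]
  obtain ⟨node_le_ptag, ptag_le_node⟩ := p.tag_mem i hi
  obtain ⟨node_le_qtag, qtag_le_node⟩ := q.tag_mem j hj
  rw [abs_lt]
  constructor <;> linarith [hp i hi, hq j hj]

theorem norm_rsSum_sub_rsSum_le {φ : ℝ → E} (hφ : BoundedVariationOn φ (Icc a b)) {x : ℝ → 𝕜}
    {δ ε : ℝ} (hε : 0 ≤ ε)
    (hx : ∀ s ∈ Icc a b, ∀ t ∈ Icc a b, |s - t| < 2 * δ → ‖x s - x t‖ ≤ ε)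
    {p q : TaggedPartition a b} (hp : p.MeshLT δ) (hq : q.MeshLT δ) :
    ‖p.rsSum φ x - q.rsSum φ x‖ ≤ ε * (eVariationOn φ (Icc a b)).toReal := by
  have common_refinement : p.rsSum φ x - q.rsSum φ x = ∑ j ∈ Finset.range q.size,
      ∑ i ∈ Finset.range p.size, (x (p.tag i) - x (q.tag j)) • crossIncrement φ p q i j := by
    simp only [sub_smul, Finset.sum_sub_distrib, ← Finset.smul_sum]
    congr 1
    · rw [Finset.sum_comm]
      refine Finset.sum_congr rfl fun i hi => ?_
      rw [← Finset.smul_sum, sum_crossIncrement_right φ p q (Finset.mem_range.1 hi)]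
    · refine Finset.sum_congr rfl fun j hj => ?_
      rw [sum_crossIncrement_left φ p q (Finset.mem_range.1 hj)]
  rw [common_refinement]
  refine le_trans ?_ (mul_le_mul_of_nonneg_left (sum_norm_crossIncrement_le hφ p q) hε)
  simp only [Finset.mul_sum]
  refine norm_sum_le_of_le _ fun j hj => norm_sum_le_of_le _ fun i hi => ?_
  rw [norm_smul]
  rw [Finset.mem_range] at hi hj
  rcases eq_or_ne (crossIncrement φ p q i j) 0 with h | h
  · simp [h]
  · gcongr
    exact hx _ (p.tag_mem_Icc hi) _ (q.tag_mem_Icc hj) (abs_tag_sub_tag_lt hp hq hi hj h)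

theorem exists_tendsto_rsSum [CompleteSpace E] (hab : a ≤ b) {φ : ℝ → E}
    (hφ : BoundedVariationOn φ (Icc a b)) {x : ℝ → 𝕜} (hx : ContinuousOn x (Icc a b)) :
    ∃ I, Tendsto (rsSum φ x) (meshFilter a b) (𝓝 I) := by
  have := meshFilter_neBot hab
  rw [← cauchy_map_iff_exists_tendsto, Metric.cauchy_iff]
  refine ⟨inferInstance, fun ε hε => ?_⟩
  set V := (eVariationOn φ (Icc a b)).toReal
  have hV : 0 < V + 1 := by positivity
  obtain ⟨δ, hδ, hxδ⟩ := Metric.uniformContinuousOn_iff.1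
    (isCompact_Icc.uniformContinuousOn_of_continuous hx) (ε / (V + 1)) (by positivity)
  refine ⟨_, image_mem_map (eventually_meshLT (half_pos hδ)), ?_⟩
  rintro _ ⟨p, hp, rfl⟩ _ ⟨q, hq, rfl⟩
  rw [dist_eq_norm]
  calc ‖p.rsSum φ x - q.rsSum φ x‖ ≤ ε / (V + 1) * V := by
        refine norm_rsSum_sub_rsSum_le hφ (by positivity) (fun s hs t ht hst => ?_) hp hq
        rw [← dist_eq_norm]
        exact (hxδ s hs t ht (by rwa [mul_div_cancel₀ δ two_ne_zero] at hst)).le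
    _ < ε / (V + 1) * (V + 1) := by gcongr; exact lt_add_one V
    _ = ε := div_mul_cancel₀ ε hV.ne'

end Existence

end TaggedPartition

open TaggedPartition

section Representation

variable {a b : ℝ} {𝕜 E : Type*} [NormedField 𝕜] [NormedAddCommGroup E] [NormedSpace 𝕜 E]

/-- The vector-valued functional `ℓ` on `C([a, b], 𝕜)` is the Riemann–Stieltjes integral
`x ↦ ∫ x dφ`. Integrands are extended to `ℝ` by constants; the values outside `[a, b]` do not enter
the sums. -/
def StieltjesRepresents (hab : a ≤ b) (φ : ℝ → E) (ℓ : C(Icc a b, 𝕜) →L[𝕜] E) : Prop :=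
  ∀ x : C(Icc a b, 𝕜), Tendsto (rsSum φ (IccExtend hab x)) (meshFilter a b) (𝓝 (ℓ x))

variable {hab : a ≤ b} {φ ψ : ℝ → E} {ℓ ℓ' : C(Icc a b, 𝕜) →L[𝕜] E}

theorem norm_le_of_tendsto_rsSum (hφ : BoundedVariationOn φ (Icc a b)) (x : C(Icc a b, 𝕜)) {I : E}
    (h : Tendsto (rsSum φ (IccExtend hab x)) (meshFilter a b) (𝓝 I)) :
    ‖I‖ ≤ (eVariationOn φ (Icc a b)).toReal * ‖x‖ := by
  have := meshFilter_neBot hab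
  refine le_of_tendsto h.norm (.of_forall fun p => ?_)
  rw [mul_comm]
  exact p.norm_rsSum_le hφ (fun s _ => x.norm_coe_le_norm _) (norm_nonneg x)

theorem exists_stieltjesRepresents [CompleteSpace E] (hab : a ≤ b)
    (hφ : BoundedVariationOn φ (Icc a b)) :
    ∃ ℓ : C(Icc a b, 𝕜) →L[𝕜] E, StieltjesRepresents hab φ ℓ := by
  have := meshFilter_neBot hab
  choose I hI using fun x : C(Icc a b, 𝕜) =>
    exists_tendsto_rsSum hab hφ (x.continuous.Icc_extend' (h := hab)).continuousOn
  let L : C(Icc a b, 𝕜) →ₗ[𝕜] E :=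
    { toFun := I
      map_add' := fun x y => tendsto_nhds_unique (hI (x + y)) <|
        ((hI x).add (hI y)).congr fun p => (p.rsSum_add_right φ _ _).symm
      map_smul' := fun c x => tendsto_nhds_unique (hI (c • x)) <|
        ((hI x).const_smul c).congr fun p => (p.rsSum_smul_right c φ _).symm }
  exact ⟨L.mkContinuous _ fun x => norm_le_of_tendsto_rsSum hφ x (hI x), hI⟩

namespace StieltjesRepresents

theorem unique (h : StieltjesRepresents hab φ ℓ) (h' : StieltjesRepresents hab φ ℓ') : ℓ = ℓ' := by
  have := meshFilter_neBot hab
  ext x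
  exact tendsto_nhds_unique (h x) (h' x)

theorem add (h : StieltjesRepresents hab φ ℓ) (h' : StieltjesRepresents hab ψ ℓ') :
    StieltjesRepresents hab (φ + ψ) (ℓ + ℓ') :=
  fun x => ((h x).add (h' x)).congr fun p => (p.rsSum_add_left φ ψ _).symm

theorem smul (h : StieltjesRepresents hab φ ℓ) (c : 𝕜) :
    StieltjesRepresents hab (c • φ) (c • ℓ) :=
  fun x => ((h x).const_smul c).congr fun p => (p.rsSum_smul_left c φ _).symm

theorem apply_one (h : StieltjesRepresents hab φ ℓ) : ℓ 1 = φ b - φ a := by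
  have := meshFilter_neBot hab
  refine tendsto_nhds_unique (h 1) (tendsto_const_nhds.congr fun p => ?_)
  have telescope := Finset.sum_range_sub (fun i => φ (p.node i)) p.size
  rw [p.node_zero, p.node_size] at telescope
  simp [rsSum, IccExtend, telescope]

end StieltjesRepresents

theorem StieltjesRepresents.opNorm_le {𝕜 : Type*} [NontriviallyNormedField 𝕜] [NormedSpace 𝕜 E]
    {ℓ : C(Icc a b, 𝕜) →L[𝕜] E} (h : StieltjesRepresents hab φ ℓ)
    (hφ : BoundedVariationOn φ (Icc a b)) : ‖ℓ‖ ≤ (eVariationOn φ (Icc a b)).toReal :=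
  ℓ.opNorm_le_bound ENNReal.toReal_nonneg fun x => norm_le_of_tendsto_rsSum hφ x (h x)

end Representation

section Uniqueness

variable {a b : ℝ} {𝕜 E : Type*} [RCLike 𝕜] [NormedAddCommGroup E] [NormedSpace 𝕜 E]
  {hab : a ≤ b} {φ ψ : ℝ → E} {ℓ : C(Icc a b, 𝕜) →L[𝕜] E}

/-- For `c < t`, a continuous approximation of the indicator function of `(-∞, t)`, restricted to
`[a, b]`: it equals `1` up to `c`, decreases between `c` and `t`, and vanishes from `t` on. -/
noncomputable def ramp (𝕜 : Type*) [RCLike 𝕜] (a b c t : ℝ) : C(Icc a b, 𝕜) where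
  toFun s := ((1 - Real.smoothTransition ((s - c) / (t - c)) : ℝ) : 𝕜)
  continuous_toFun := by fun_prop

theorem norm_sum_one_sub_weight_smul_sub_le [NormedSpace ℝ E] {p : TaggedPartition a b}
    {c₀ c t : ℝ} (mesh : p.MeshLT (c - c₀)) (hc₀ : c₀ ≤ c) (hac : a ≤ c) (htb : t ≤ b) {W : ℝ → ℝ}
    (W_mono : Monotone W) (W_zero : ∀ s ≤ c, W s = 0) (W_one : ∀ s, t ≤ s → W s = 1) {z : E} {ε : ℝ}
    (hφ : ∀ s ∈ Ioo c₀ t, ‖φ s - z‖ ≤ ε) :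
    ‖∑ i ∈ Finset.range p.size, (1 - W (p.node (i + 1))) • (φ (p.node (i + 1)) - φ (p.node i)) -
      (z - φ a)‖ ≤ ε := by
  have near := norm_sum_one_sub_smul_increment_sub_le (f := fun i => φ (p.node i)) (z := z) (ε := ε)
    (W_mono.comp p.monotone_node) (W_zero _ (p.node_zero.le.trans hac))
    (W_one _ (htb.trans p.node_size.ge)) fun i hi hne => hφ _ ⟨?_, ?_⟩
  · simpa only [p.node_zero, Function.comp_apply] using near
  · by_contra! hle
    have hle' : p.node (i + 1) ≤ c := by linarith [mesh i hi]
    exact hne ((W_zero _ (hle.trans hc₀)).trans (W_zero _ hle').symm)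
  · by_contra! hle
    exact hne ((W_one _ hle).trans (W_one _ (hle.trans (p.monotone_node i.le_succ))).symm)

theorem StieltjesRepresents.norm_apply_ramp_sub_le (h : StieltjesRepresents hab φ ℓ) {c₀ c t : ℝ}
    (hc₀ : c₀ < c) (hct : c < t) (hac : a ≤ c) (htb : t ≤ b) {z : E} {ε : ℝ}
    (hφ : ∀ s ∈ Ioo c₀ t, ‖φ s - z‖ ≤ ε) : ‖ℓ (ramp 𝕜 a b c t) - (z - φ a)‖ ≤ ε := by
  let _ : NormedSpace ℝ E := NormedSpace.restrictScalars ℝ 𝕜 E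
  have : IsScalarTower ℝ 𝕜 E := RestrictScalars.isScalarTower ℝ 𝕜 E
  have hct' : 0 < t - c := sub_pos.2 hct
  have right_tagged := (frequently_tag_eq_and_node_mem hab dense_univ).and_eventually
    (eventually_meshLT (sub_pos.2 hc₀))
  suffices near : ∃ᶠ p in meshFilter a b,
      rsSum φ (IccExtend hab (ramp 𝕜 a b c t)) p ∈ {v | ‖v - (z - φ a)‖ ≤ ε} from
    (isClosed_le (by fun_prop) continuous_const).mem_of_frequently_of_tendsto near (h _)
  refine right_tagged.mono fun p ⟨⟨tag_eq, _⟩, mesh⟩ => ?_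
  have sum_eq : rsSum φ (IccExtend hab (ramp 𝕜 a b c t)) p = ∑ i ∈ Finset.range p.size,
      (1 - Real.smoothTransition ((p.node (i + 1) - c) / (t - c))) •
        (φ (p.node (i + 1)) - φ (p.node i)) := by
    refine Finset.sum_congr rfl fun i hi => ?_
    rw [tag_eq, IccExtend_of_mem hab _ (p.node_mem (Finset.mem_range.1 hi)),
      RCLike.real_smul_eq_coe_smul (K := 𝕜)]
    rfl
  rw [mem_ofPred_eq, sum_eq]
  refine norm_sum_one_sub_weight_smul_sub_le mesh hc₀.le hac htb
    (W := fun s => Real.smoothTransition ((s - c) / (t - c)))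
    (Real.smoothTransition.monotone.comp fun s s' hs => by gcongr) (fun s hs => ?_)
    (fun s hs => ?_) hφ
  · exact Real.smoothTransition.zero_of_nonpos
      (div_nonpos_of_nonpos_of_nonneg (by linarith) hct'.le)
  · exact Real.smoothTransition.one_of_one_le ((one_le_div hct').2 (by linarith))

theorem StieltjesRepresents.tendsto_apply_ramp (h : StieltjesRepresents hab φ ℓ) {t : ℝ}
    (ht : t ∈ Ioc a b) (hφ : ContinuousWithinAt φ (Iio t) t) :
    Tendsto (fun c => ℓ (ramp 𝕜 a b c t)) (𝓝[<] t) (𝓝 (φ t - φ a)) := by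
  rw [Metric.nhds_basis_closedBall.tendsto_right_iff]
  intro ε hε
  have near_t : ∀ᶠ s in 𝓝[<] t, s ∈ {s | ‖φ s - φ t‖ ≤ ε} := by
    simpa only [mem_ofPred_eq, Metric.mem_closedBall, dist_eq_norm] using
      Metric.nhds_basis_closedBall.tendsto_right_iff.1 hφ ε hε
  obtain ⟨c₀, hc₀, near_t⟩ := (mem_nhdsLT_iff_exists_Ioo_subset' ht.1).1 near_t
  filter_upwards [Ioo_mem_nhdsLT hc₀, Ioo_mem_nhdsLT ht.1] with c hc hac
  rw [Metric.mem_closedBall, dist_eq_norm]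
  exact h.norm_apply_ramp_sub_le hc.1 hc.2 hac.1.le ht.2 near_t

theorem StieltjesRepresents.integrator_sub_eq (hφ : StieltjesRepresents hab φ ℓ)
    (hψ : StieltjesRepresents hab ψ ℓ) {t : ℝ} (ht : t ∈ Ioc a b)
    (hφt : ContinuousWithinAt φ (Iio t) t) (hψt : ContinuousWithinAt ψ (Iio t) t) :
    φ t - φ a = ψ t - ψ a :=
  tendsto_nhds_unique (hφ.tendsto_apply_ramp ht hφt) (hψ.tendsto_apply_ramp ht hψt)

end Uniqueness

section LeftRegularization

variable {E : Type*} [NormedAddCommGroup E]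

/-- The function which is left-continuous except at `b` and agrees with `f` at the continuity points
of `f`, for `f` constant on `[b, ∞)`. The value at `b` and beyond is taken at `b + 1` so that a jump
of `f` at `b` is kept. -/
noncomputable def leftRegularization (b : ℝ) (f : ℝ → E) (t : ℝ) : E :=
  f.leftLim (if t < b then t else b + 1)

theorem eVariationOn_leftRegularization_le (b : ℝ) (f : ℝ → E) :
    eVariationOn (leftRegularization b f) univ ≤ eVariationOn f univ := by
  refine le_trans ?_ (eVariationOn.eVariationOn_leftLim_le isOpen_univ)
  refine eVariationOn.comp_le_of_monotoneOn f.leftLim _ (fun s _ t _ hst => ?_) (mapsTo_univ _ _)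
  split_ifs <;> linarith

theorem boundedVariationOn_leftRegularization {b : ℝ} {f : ℝ → E} (hf : BoundedVariationOn f univ) :
    BoundedVariationOn (leftRegularization b f) univ :=
  ((eVariationOn_leftRegularization_le b f).trans_lt hf.lt_top).ne

theorem continuousWithinAt_leftRegularization [CompleteSpace E] {b : ℝ} {f : ℝ → E}
    (hf : BoundedVariationOn f univ) {t : ℝ} (ht : t < b) :
    ContinuousWithinAt (leftRegularization b f) (Iio t) t := by
  have hleft : ContinuousWithinAt f.leftLim (Iio t) t :=
    hf.continuousWithinAt_leftLim.mono Iio_subset_Iic_self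
  refine hleft.congr (fun s hs => ?_) ?_
  · rw [leftRegularization, if_pos (lt_trans hs ht)]
  · rw [leftRegularization, if_pos ht]

theorem leftRegularization_of_continuousAt {b : ℝ} {f : ℝ → E} {t : ℝ} (ht : t < b)
    (hf : ContinuousAt f t) : leftRegularization b f t = f t := by
  rw [leftRegularization, if_pos ht, hf.continuousWithinAt.leftLim_eq]

theorem leftRegularization_of_ge {b : ℝ} {f : ℝ → E} {z : E} (hf : ∀ s ≥ b, f s = z) {t : ℝ}
    (ht : b ≤ t) : leftRegularization b f t = z := by
  rw [leftRegularization, if_neg ht.not_gt]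
  refine leftLim_eq_of_tendsto (tendsto_const_nhds.congr' ?_)
  filter_upwards [Ioo_mem_nhdsLT (lt_add_one b)] with s hs
  exact (hf s hs.1.le).symm

theorem leftRegularization_of_le {a b : ℝ} (hab : a < b) {f : ℝ → E} {z : E}
    (hf : ∀ s ≤ a, f s = z) {t : ℝ} (ht : t ≤ a) : leftRegularization b f t = z := by
  rw [leftRegularization, if_pos (ht.trans_lt hab)]
  refine leftLim_eq_of_tendsto (tendsto_const_nhds.congr' ?_)
  filter_upwards [self_mem_nhdsWithin] with s hs
  exact (hf s (hs.out.le.trans ht)).symm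

theorem dense_setOf_continuousAt [NormedSpace ℝ E] [FiniteDimensional ℝ E] {f : ℝ → E}
    (hf : BoundedVariationOn f univ) : Dense {t | ContinuousAt f t} :=
  MeasureTheory.Measure.dense_of_ae (μ := MeasureTheory.volume) <|
    hf.locallyBoundedVariationOn.ae_differentiableAt.mono fun _ ht => ht.continuousAt

end LeftRegularization

section ChangeOfIntegrator

variable {a b : ℝ} {𝕜 E F : Type*} [NormedField 𝕜] [NormedAddCommGroup E] [NormedSpace 𝕜 E]
  [NormedAddCommGroup F] [NormedSpace 𝕜 F] {hab : a ≤ b} {φ ψ : ℝ → E} {ℓ : C(Icc a b, 𝕜) →L[𝕜] E}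

theorem StieltjesRepresents.comp_left (h : StieltjesRepresents hab φ ℓ) (L : E →L[𝕜] F) :
    StieltjesRepresents hab (L ∘ φ) (L ∘L ℓ) := fun x =>
  ((L.continuous.tendsto _).comp (h x)).congr fun p => by simp [rsSum]

theorem StieltjesRepresents.congr_of_dense [CompleteSpace E] (h : StieltjesRepresents hab φ ℓ)
    (hψ : BoundedVariationOn ψ (Icc a b)) {D : Set ℝ} (hD : Dense D)
    (heq : EqOn φ ψ (insert a (insert b D))) : StieltjesRepresents hab ψ ℓ := by
  obtain ⟨ℓ', h'⟩ := exists_stieltjesRepresents (𝕜 := 𝕜) hab hψ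
  suffices ℓ = ℓ' from this ▸ h'
  ext x
  refine tendsto_nhds_unique_of_frequently_eq (h x) (h' x) <|
    (frequently_tag_eq_and_node_mem hab hD).mono fun p hp => ?_
  simp only [rsSum, heq (hp.2 _)]

theorem StieltjesRepresents.leftRegularization [NormedSpace ℝ E] [FiniteDimensional ℝ E]
    (h : StieltjesRepresents hab φ ℓ) (hlt : a < b) (hφ : BoundedVariationOn φ univ)
    (hφa : ∀ t ≤ a, φ t = φ a) (hφb : ∀ t ≥ b, φ t = φ b) :
    StieltjesRepresents hab (leftRegularization b φ) ℓ := by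
  have := FiniteDimensional.complete ℝ E
  refine h.congr_of_dense ((boundedVariationOn_leftRegularization hφ).mono (subset_univ _))
    (dense_setOf_continuousAt hφ) ?_
  rintro t (rfl | rfl | ht)
  · exact (leftRegularization_of_le hlt hφa le_rfl).symm
  · exact (leftRegularization_of_ge hφb le_rfl).symm
  · rcases lt_or_ge t b with htb | htb
    · exact (leftRegularization_of_continuousAt htb ht).symm
    · rw [leftRegularization_of_ge hφb htb, hφb t htb]

end ChangeOfIntegrator

section BoundedFunctions

variable {X 𝕜 : Type*} [RCLike 𝕜]

/-- The indicator function of `S`, as an element of the space `ℓ^∞(X)` of bounded functions. -/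
noncomputable def lpIndicator (𝕜 : Type*) [RCLike 𝕜] (S : Set X) : lp (fun _ : X => 𝕜) ∞ :=
  ⟨fun s => ((S.indicator (fun _ => 1) s : ℝ) : 𝕜), memℓp_infty ⟨1, by
    rintro _ ⟨s, rfl⟩
    by_cases hs : s ∈ S <;> simp [hs]⟩⟩

theorem lpIndicator_empty : lpIndicator 𝕜 (∅ : Set X) = 0 := by
  ext s
  simp [lpIndicator]

theorem sum_smul_lpIndicator_sub_apply (S : ℕ → Set X) (c : ℕ → 𝕜) (n : ℕ) (s : X) :
    (∑ i ∈ Finset.range n, c i • (lpIndicator 𝕜 (S (i + 1)) - lpIndicator 𝕜 (S i))) s =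
      ∑ i ∈ Finset.range n,
        ((S (i + 1)).indicator (fun _ => (1 : ℝ)) s - (S i).indicator (fun _ => 1) s) • c i := by
  rw [lp.coeFn_sum, Finset.sum_apply]
  refine Finset.sum_congr rfl fun i _ => ?_
  rw [lp.coeFn_smul, lp.coeFn_sub, Pi.smul_apply, Pi.sub_apply, smul_eq_mul,
    RCLike.real_smul_eq_coe_mul, mul_comm, RCLike.ofReal_sub]
  rfl

theorem monotone_indicator_one {S : ℕ → Set X} (hS : Monotone S) (s : X) :
    Monotone fun i => (S i).indicator (fun _ => (1 : ℝ)) s :=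
  fun _ _ hij => indicator_le_indicator_of_subset (hS hij) (fun _ => zero_le_one) s

theorem norm_sum_smul_lpIndicator_sub_le {S : ℕ → Set X} (hS : Monotone S) {c : ℕ → 𝕜} {K : ℝ}
    {n : ℕ} (hK : 0 ≤ K) (hc : ∀ i < n, ‖c i‖ ≤ K) :
    ‖∑ i ∈ Finset.range n, c i • (lpIndicator 𝕜 (S (i + 1)) - lpIndicator 𝕜 (S i))‖ ≤ K := by
  refine lp.norm_le_of_forall_le hK fun s => ?_
  rw [sum_smul_lpIndicator_sub_apply]
  refine (norm_sum_increment_smul_le (monotone_indicator_one hS s) fun i hi _ => hc i hi).trans ?_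
  refine mul_le_of_le_one_left hK (sub_le_self _ ?_ |>.trans ?_)
  · exact indicator_nonneg (fun _ _ => zero_le_one) s
  · exact indicator_le' (fun _ _ => le_rfl) (fun _ _ => zero_le_one) s

theorem norm_sum_smul_lpIndicator_sub_sub_le {S : ℕ → Set X} (hS : Monotone S) {n : ℕ}
    (hS₀ : S 0 = ∅) (hSn : S n = univ) {c : ℕ → 𝕜} {y : lp (fun _ : X => 𝕜) ∞} {ε : ℝ} (hε : 0 ≤ ε)
    (hc : ∀ i < n, ∀ s ∈ S (i + 1) \ S i, ‖c i - y s‖ ≤ ε) :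
    ‖∑ i ∈ Finset.range n, c i • (lpIndicator 𝕜 (S (i + 1)) - lpIndicator 𝕜 (S i)) - y‖ ≤ ε := by
  refine lp.norm_le_of_forall_le hε fun s => ?_
  set w : ℕ → ℝ := fun i => (S i).indicator (fun _ => 1) s with hw
  have w_zero : w 0 = 0 := by simp [hw, hS₀]
  have w_n : w n = 1 := by simp [hw, hSn]
  have sum_eq : (∑ i ∈ Finset.range n,
        c i • (lpIndicator 𝕜 (S (i + 1)) - lpIndicator 𝕜 (S i)) - y) s =
      ∑ i ∈ Finset.range n, (w (i + 1) - w i) • (c i - y s) := by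
    rw [lp.coeFn_sub, Pi.sub_apply, sum_smul_lpIndicator_sub_apply]
    simp_rw [smul_sub _ _ (y s)]
    rw [Finset.sum_sub_distrib, ← Finset.sum_smul, Finset.sum_range_sub w, w_zero, w_n, sub_zero,
      one_smul]
  have hne : ∀ i, w i ≠ w (i + 1) → s ∈ S (i + 1) \ S i := by
    intro i hne
    by_contra hs
    refine hne (indicator_eq_indicator ⟨fun h => hS i.le_succ h, fun h => ?_⟩ rfl)
    exact by_contra fun h' => hs ⟨h, h'⟩
  rw [sum_eq]
  refine (norm_sum_increment_smul_le (monotone_indicator_one hS s)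
    fun i hi h => hc i hi s (hne i h)).trans_eq ?_
  change (w n - w 0) * ε = ε
  rw [w_n, w_zero, sub_zero, one_mul]

theorem eVariationOn_apply_lpIndicator_le {α : Type*} [LinearOrder α] {S : α → Set X}
    (hS : Monotone S) (L : lp (fun _ : X => 𝕜) ∞ →L[𝕜] 𝕜) :
    eVariationOn (fun t => L (lpIndicator 𝕜 (S t))) univ ≤ ENNReal.ofReal ‖L‖ := by
  refine iSup_le fun ⟨n, u, hu, _⟩ => ?_
  choose c hc_norm hc using fun i =>
    RCLike.exists_norm_eq_mul_self (L (lpIndicator 𝕜 (S (u (i + 1))) - lpIndicator 𝕜 (S (u i))))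
  simp only [edist_dist, dist_eq_norm, ← map_sub]
  rw [← ENNReal.ofReal_sum_of_nonneg fun i _ => norm_nonneg _]
  refine ENNReal.ofReal_le_ofReal ?_
  have sum_eq : ((∑ i ∈ Finset.range n,
        ‖L (lpIndicator 𝕜 (S (u (i + 1))) - lpIndicator 𝕜 (S (u i)))‖ : ℝ) : 𝕜) =
      L (∑ i ∈ Finset.range n,
        c i • (lpIndicator 𝕜 (S (u (i + 1))) - lpIndicator 𝕜 (S (u i)))) := by
    simp only [hc, map_sum, map_smul, smul_eq_mul]
  rw [← RCLike.norm_of_nonneg (K := 𝕜) (Finset.sum_nonneg fun i _ => norm_nonneg _), sum_eq]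
  refine L.le_of_opNorm_le_of_le le_rfl ?_ |>.trans_eq (mul_one _)
  exact norm_sum_smul_lpIndicator_sub_le (hS.comp hu) zero_le_one fun i _ => (hc_norm i).le

/-- The isometric inclusion of the continuous functions on a compact space into `ℓ^∞`. -/
noncomputable def continuousToLp (X 𝕜 : Type*) [RCLike 𝕜] [TopologicalSpace X] [CompactSpace X] :
    C(X, 𝕜) →ₗᵢ[𝕜] lp (fun _ : X => 𝕜) ∞ where
  toFun x := ⟨fun s => x s, memℓp_infty ⟨‖x‖, forall_mem_range.2 x.norm_coe_le_norm⟩⟩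
  map_add' _ _ := rfl
  map_smul' _ _ := rfl
  norm_map' x := le_antisymm
    (lp.norm_le_of_forall_le (norm_nonneg x) x.norm_coe_le_norm)
    ((x.norm_le (norm_nonneg _)).2 fun s => lp.norm_apply_le_norm
      ENNReal.top_ne_zero (E := fun _ : X => 𝕜) ⟨fun s => x s, _⟩ s)

end BoundedFunctions

theorem exists_norm_le_comp_linearIsometry_eq {𝕜 F G : Type*} [RCLike 𝕜] [NormedAddCommGroup F]
    [NormedSpace 𝕜 F] [NormedAddCommGroup G] [NormedSpace 𝕜 G] (J : F →ₗᵢ[𝕜] G) (ℓ : F →L[𝕜] 𝕜) :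
    ∃ L : G →L[𝕜] 𝕜, ‖L‖ ≤ ‖ℓ‖ ∧ L ∘L J.toContinuousLinearMap = ℓ := by
  let e := J.equivRange
  obtain ⟨L, hL, hnorm⟩ := exists_extension_norm_eq (LinearMap.range J.toLinearMap)
    (ℓ ∘L (e.symm.toContinuousLinearEquiv : _ →L[𝕜] F))
  refine ⟨L, hnorm.trans_le ?_, ?_⟩
  · refine (ℓ.opNorm_comp_le _).trans (mul_le_of_le_one_right (norm_nonneg ℓ) ?_)
    exact e.symm.toLinearIsometry.norm_toContinuousLinearMap_le
  · ext x
    exact (hL (e x)).trans (congrArg ℓ (e.symm_apply_apply x))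

section Surjectivity

variable {a b : ℝ} {𝕜 : Type*} [RCLike 𝕜]

/-- The part of `[a, b]` to the left of `t`, including `t`, but empty for `t = a`, so that
increments over partitions of `[a, b]` account for the endpoint `a`. -/
def initialSegment (a b t : ℝ) : Set (Icc a b) :=
  {s | a < t ∧ s ≤ t}

theorem monotone_initialSegment (a b : ℝ) : Monotone (initialSegment a b) :=
  fun _ _ htt' _ hs => ⟨hs.1.trans_le htt', hs.2.trans htt'⟩

theorem initialSegment_of_le {t : ℝ} (ht : t ≤ a) : initialSegment a b t = ∅ :=
  eq_empty_of_forall_notMem fun _ hs => ht.not_gt hs.1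

theorem initialSegment_of_ge (hab : a < b) {t : ℝ} (ht : b ≤ t) : initialSegment a b t = univ :=
  eq_univ_of_forall fun s => ⟨hab.trans_le ht, s.2.2.trans ht⟩

theorem mem_Icc_of_mem_initialSegment_diff {t t' : ℝ} {s : Icc a b}
    (hs : s ∈ initialSegment a b t' \ initialSegment a b t) : (s : ℝ) ∈ Icc t t' := by
  refine ⟨?_, hs.1.2⟩
  by_contra! hst
  exact hs.2 ⟨s.2.1.trans_lt hst, hst.le⟩

theorem stieltjesRepresents_continuousToLp (hab : a < b) :
    StieltjesRepresents hab.le (fun t => lpIndicator 𝕜 (initialSegment a b t))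
      (continuousToLp (Icc a b) 𝕜).toContinuousLinearMap := by
  intro x
  rw [Metric.nhds_basis_closedBall.tendsto_right_iff]
  intro ε hε
  obtain ⟨δ, hδ, hxδ⟩ := Metric.uniformContinuous_iff.1
    (CompactSpace.uniformContinuous_of_continuous x.continuous) ε hε
  filter_upwards [eventually_meshLT hδ] with p mesh
  rw [Metric.mem_closedBall, dist_eq_norm]
  refine norm_sum_smul_lpIndicator_sub_sub_le
    (S := fun i => initialSegment a b (p.node i))
    ((monotone_initialSegment a b).comp p.monotone_node)
    (initialSegment_of_le p.node_zero.le) (initialSegment_of_ge hab p.node_size.ge) hε.le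
    fun i hi s hs => ?_
  have hs' := mem_Icc_of_mem_initialSegment_diff hs
  have htag := p.tag_mem i hi
  rw [IccExtend_of_mem hab.le _ (p.tag_mem_Icc hi), ← dist_eq_norm]
  change dist (x _) (x s) ≤ ε
  refine (hxδ ?_).le
  rw [Subtype.dist_eq, Real.dist_eq, abs_lt]
  constructor <;> linarith [mesh i hi, hs'.1, hs'.2, htag.1, htag.2]

theorem exists_integrator_of_dual (hab : a < b) (ℓ : C(Icc a b, 𝕜) →L[𝕜] 𝕜) :
    ∃ f : ℝ → 𝕜, eVariationOn f univ ≤ ENNReal.ofReal ‖ℓ‖ ∧ (∀ t ≤ a, f t = 0) ∧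
      (∀ t ≥ b, f t = f b) ∧ StieltjesRepresents hab.le f ℓ := by
  obtain ⟨L, hL, hLℓ⟩ := exists_norm_le_comp_linearIsometry_eq (continuousToLp (Icc a b) 𝕜) ℓ
  refine ⟨L ∘ fun t => lpIndicator 𝕜 (initialSegment a b t), ?_, fun t ht => ?_, fun t ht => ?_,
    hLℓ ▸ (stieltjesRepresents_continuousToLp hab).comp_left L⟩
  · exact (eVariationOn_apply_lpIndicator_le (monotone_initialSegment a b) L).trans
      (ENNReal.ofReal_le_ofReal hL)
  · rw [Function.comp_apply, initialSegment_of_le ht, lpIndicator_empty, map_zero]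
  · simp only [Function.comp_apply, initialSegment_of_ge hab ht, initialSegment_of_ge hab le_rfl]

theorem exists_leftContinuous_integrator_of_dual (hab : a < b) (ℓ : C(Icc a b, 𝕜) →L[𝕜] 𝕜) :
    ∃ φ : ℝ → 𝕜, eVariationOn φ univ ≤ ENNReal.ofReal ‖ℓ‖ ∧
      (∀ t < b, ContinuousWithinAt φ (Iio t) t) ∧ (∀ t ≤ a, φ t = 0) ∧ (∀ t ≥ b, φ t = φ b) ∧
      StieltjesRepresents hab.le φ ℓ := by
  obtain ⟨f, hf, hfa, hfb, h⟩ := exists_integrator_of_dual hab ℓ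
  have hf' : BoundedVariationOn f univ := (hf.trans_lt ENNReal.ofReal_lt_top).ne
  refine ⟨leftRegularization b f, (eVariationOn_leftRegularization_le b f).trans hf,
    fun t ht => continuousWithinAt_leftRegularization hf' ht,
    fun t ht => leftRegularization_of_le hab hfa ht, fun t ht => ?_,
    h.leftRegularization hab hf' (fun t ht => (hfa t ht).trans (hfa a le_rfl).symm) hfb⟩
  rw [leftRegularization_of_ge hfb ht, leftRegularization_of_ge hfb le_rfl]

end Surjectivity

section NBV

variable {a b : ℝ} {φ ψ : ℝ → ℂ} {ℓ : C(Icc a b, ℂ) →L[ℂ] ℂ}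

/-- The tagged partition with nodes `t 0, …, t n` and tags `ξ 0, …, ξ (n - 1)`: the nodes are
continued constantly and the tags by the junk value `0`. -/
def TaggedPartition.ofFin {n : ℕ} (t : Fin (n + 1) → ℝ) (ξ : Fin n → ℝ) (ht : Monotone t)
    (h₀ : t 0 = a) (h₁ : t (Fin.last n) = b)
    (hξ : ∀ i : Fin n, ξ i ∈ Icc (t i.castSucc) (t i.succ)) : TaggedPartition a b where
  size := n
  node i := t ⟨min i n, by lia⟩
  tag i := if hi : i < n then ξ ⟨i, hi⟩ else 0
  node_zero := by simpa using h₀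
  node_size := by simpa [Fin.last] using h₁
  monotone_node i j hij := ht (by simp only [Fin.mk_le_mk]; lia)
  tag_mem i hi := by
    have := hξ ⟨i, hi⟩
    simpa [hi, hi.le, Nat.succ_le_of_lt hi] using this

theorem isRSIntegral_iff_tendsto {x : ℝ → ℂ} {I : ℂ} :
    IsRSIntegral a b φ x I ↔ Tendsto (rsSum φ x) (meshFilter a b) (𝓝 I) := by
  rw [(hasBasis_meshFilter a b).tendsto_iff Metric.nhds_basis_ball]
  refine forall₂_congr fun ε _ => exists_congr fun δ => and_congr_right fun _ => ⟨?_, ?_⟩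
  · intro h p hp
    have := h p.size (fun i => p.node i) (fun i => p.tag i) p.node_zero p.node_size
      (fun i j hij => p.monotone_node hij)
      fun i => ⟨(p.tag_mem i i.2).1, (p.tag_mem i i.2).2, hp i i.2⟩
    simpa [dist_eq_norm, rsSum, Finset.sum_range] using this
  · intro h n t ξ h₀ h₁ ht hξ
    let p := TaggedPartition.ofFin t ξ ht h₀ h₁ fun i => ⟨(hξ i).1, (hξ i).2.1⟩
    have node_castSucc (i : Fin n) : p.node i = t i.castSucc :=
      congrArg t (Fin.ext (min_eq_left i.2.le))
    have node_succ (i : Fin n) : p.node (i + 1) = t i.succ :=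
      congrArg t (Fin.ext (min_eq_left i.2))
    have tag_eq (i : Fin n) : p.tag i = ξ i := dif_pos i.2
    have mesh : p.MeshLT δ := fun i hi => by
      simpa only [node_castSucc ⟨i, hi⟩, node_succ ⟨i, hi⟩] using (hξ ⟨i, hi⟩).2.2
    have sum_eq : rsSum φ x p =
        ∑ i : Fin n, x (ξ i) * (φ (t i.succ) - φ (t i.castSucc)) :=
      (Finset.sum_range _).trans <| Finset.sum_congr rfl fun i _ => by
        rw [tag_eq i, node_castSucc i, node_succ i, smul_eq_mul]
    exact sum_eq ▸ mem_ball_iff_norm.1 (h p mesh)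

theorem representsOn_iff_stieltjesRepresents (hab : a ≤ b) :
    RepresentsOn a b hab φ ℓ ↔ StieltjesRepresents hab φ ℓ :=
  forall_congr' fun _ => isRSIntegral_iff_tendsto

theorem exists_nbvOn_representsOn (hab : a < b) (ℓ : C(Icc a b, ℂ) →L[ℂ] ℂ) :
    ∃ φ, (NBVOn a b φ ∧ RepresentsOn a b hab.le φ ℓ) ∧
      (eVariationOn φ (Icc a b)).toReal ≤ ‖ℓ‖ := by
  obtain ⟨φ, hV, hleft, hφa, hφb, h⟩ := exists_leftContinuous_integrator_of_dual hab ℓ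
  have hV' : eVariationOn φ (Icc a b) ≤ ENNReal.ofReal ‖ℓ‖ :=
    (eVariationOn.mono φ (subset_univ _)).trans hV
  refine ⟨φ, ⟨⟨(hV'.trans_lt ENNReal.ofReal_lt_top).ne, fun t ht => hleft t ht.2, hφa a le_rfl,
    hφa, hφb⟩, (representsOn_iff_stieltjesRepresents hab.le).2 h⟩, ?_⟩
  exact ENNReal.toReal_le_of_le_ofReal (norm_nonneg ℓ) hV'

theorem NBVOn.eq_of_representsOn (hab : a ≤ b) (hφ : NBVOn a b φ) (hψ : NBVOn a b ψ)
    (h : RepresentsOn a b hab φ ℓ) (h' : RepresentsOn a b hab ψ ℓ) : φ = ψ := by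
  obtain ⟨_, hφleft, hφa, hφle, hφge⟩ := hφ
  obtain ⟨_, hψleft, hψa, hψle, hψge⟩ := hψ
  rw [representsOn_iff_stieltjesRepresents] at h h'
  have eq_b : φ b = ψ b := by simpa [hφa, hψa] using h.apply_one.symm.trans h'.apply_one
  funext t
  rcases le_or_gt t a with hta | hta
  · rw [hφle t hta, hψle t hta]
  rcases le_or_gt b t with hbt | htb
  · rw [hφge t hbt, hψge t hbt, eq_b]
  · simpa [hφa, hψa] using
      h.integrator_sub_eq h' ⟨hta, htb.le⟩ (hφleft t ⟨hta, htb⟩) (hψleft t ⟨hta, htb⟩)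

end NBV

/-- Riesz representation: the map `I : NBV([a,b]) → (C([a,b],ℂ))′`, `φ ↦ (x ↦ ∫ x dφ)`,
is a well-defined isometric isomorphism of Banach spaces: it is linear, bijective and
norm-preserving (`NBV` carries the total-variation norm). -/
theorem nbv_isometric_isomorphism_dual_C (a b : ℝ) (hab : a < b) :
    (∀ φ : ℝ → ℂ, NBVOn a b φ →
        ∃! ℓ : C(Set.Icc a b, ℂ) →L[ℂ] ℂ, RepresentsOn a b hab.le φ ℓ) ∧
      (∀ ℓ : C(Set.Icc a b, ℂ) →L[ℂ] ℂ,
        ∃! φ : ℝ → ℂ, NBVOn a b φ ∧ RepresentsOn a b hab.le φ ℓ) ∧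
      (∀ (φ : ℝ → ℂ) (ℓ : C(Set.Icc a b, ℂ) →L[ℂ] ℂ), NBVOn a b φ →
        RepresentsOn a b hab.le φ ℓ → ‖ℓ‖ = (eVariationOn φ (Set.Icc a b)).toReal) ∧
      (∀ (φ ψ : ℝ → ℂ) (ℓφ ℓψ ℓ : C(Set.Icc a b, ℂ) →L[ℂ] ℂ),
        NBVOn a b φ → NBVOn a b ψ → RepresentsOn a b hab.le φ ℓφ →
        RepresentsOn a b hab.le ψ ℓψ → RepresentsOn a b hab.le (φ + ψ) ℓ →
        ℓ = ℓφ + ℓψ) ∧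
      (∀ (c : ℂ) (φ : ℝ → ℂ) (ℓφ ℓ : C(Set.Icc a b, ℂ) →L[ℂ] ℂ),
        NBVOn a b φ → RepresentsOn a b hab.le φ ℓφ →
        RepresentsOn a b hab.le (c • φ) ℓ → ℓ = c • ℓφ) := by
  have rep {φ : ℝ → ℂ} {ℓ : C(Icc a b, ℂ) →L[ℂ] ℂ} (h : RepresentsOn a b hab.le φ ℓ) :
    StieltjesRepresents hab.le φ ℓ := (representsOn_iff_stieltjesRepresents hab.le).1 h
  refine ⟨fun φ hφ => ?_, fun ℓ => ?_, fun φ ℓ hφ h => le_antisymm ((rep h).opNorm_le hφ.1) ?_,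
    fun φ ψ ℓφ ℓψ ℓ _ _ hℓφ hℓψ hℓ => (rep hℓ).unique ((rep hℓφ).add (rep hℓψ)),
    fun c φ ℓφ ℓ _ hℓφ hℓ => (rep hℓ).unique ((rep hℓφ).smul c)⟩
  · obtain ⟨ℓ, hℓ⟩ := exists_stieltjesRepresents (𝕜 := ℂ) hab.le hφ.1
    exact ⟨ℓ, (representsOn_iff_stieltjesRepresents hab.le).2 hℓ, fun ℓ' hℓ' => (rep hℓ').unique hℓ⟩
  · obtain ⟨φ, hφ, -⟩ := exists_nbvOn_representsOn hab ℓ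
    exact ⟨φ, hφ, fun ψ hψ => hψ.1.eq_of_representsOn hab.le hφ.1 hψ.2 hφ.2⟩
  · obtain ⟨ψ, ⟨hψ, hψℓ⟩, hψV⟩ := exists_nbvOn_representsOn hab ℓ
    rwa [hφ.eq_of_representsOn hab.le hψ h hψℓ]
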